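/- Let P ⊆ Φ_{B_n} be a signed poset, let A ⊆ {1,…,n}, and let P_A = P ∩ span_ℝ{e_i : i ∈ A} be the induced signed poset on the coordinates A (which is again a signed poset). If P_A has a connected ideal that intersects at least two other connected ideals of P_A nontrivially, then P has a connected ideal that intersects at least two other connected ideals of P nontrivially. -/

import Mathlib

open scoped Classical

noncomputable section

/-- Signed index set `±[n]`: `(true, i)` represents `+i`, `(false, i)` represents `-i`. -/
abbrev SIdx (n : ℕ) := Bool × Fin n

/-- Negation `a ↦ -a` on `±[n]`. -/
def negS {n : ℕ} (a : SIdx n) : SIdx n := (!a.1, a.2)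

/-- Standard basis vector `e_i` of `ℝ^n`. -/
def stdB (n : ℕ) (i : Fin n) : Fin n → ℝ := Pi.single i 1

/-- `rsgn true = 1`, `rsgn false = -1`. -/
def rsgn (s : Bool) : ℝ := if s then 1 else -1

/-- `v(a)` for `a ∈ ±[n]`: `v(+i) = e_i`, `v(-i) = -e_i`. -/
def vS {n : ℕ} (a : SIdx n) : Fin n → ℝ := rsgn a.1 • stdB n a.2

/-- `v` on `±[n] ∪ {0}` (with `none` playing the role of `0`). -/
def vO {n : ℕ} : Option (SIdx n) → (Fin n → ℝ)
  | none => 0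
  | some a => vS a

/-- Negation on `±[n] ∪ {0}`, fixing `0`. -/
def negO {n : ℕ} : Option (SIdx n) → Option (SIdx n)
  | none => none
  | some a => some (negS a)

/-- Standard inner product on `ℝ^n`. -/
def dotR {n : ℕ} (x y : Fin n → ℝ) : ℝ := ∑ i, x i * y i

/-- The type `B_n` root system `Φ_{B_n}`. -/
def BnRoots (n : ℕ) : Set (Fin n → ℝ) :=
  {α | (∃ i j : Fin n, i < j ∧ ∃ s t : Bool, α = rsgn s • stdB n i + rsgn t • stdB n j) ∨
    ∃ i : Fin n, ∃ s : Bool, α = rsgn s • stdB n i}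

/-- The positive roots `Φ⁺_{B_n}`. -/
def BnPos (n : ℕ) : Set (Fin n → ℝ) :=
  {α | (∃ i j : Fin n, i < j ∧ ∃ t : Bool, α = stdB n i + rsgn t • stdB n j) ∨
    ∃ i : Fin n, α = stdB n i}

/-- The type `C_n` root system `Φ_{C_n}`. -/
def CnRoots (n : ℕ) : Set (Fin n → ℝ) :=
  {α | (∃ i j : Fin n, i < j ∧ ∃ s t : Bool, α = rsgn s • stdB n i + rsgn t • stdB n j) ∨
    ∃ i : Fin n, ∃ s : Bool, α = (2 * rsgn s) • stdB n i}

/-- Nonnegative real linear combinations of elements of `S`. -/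
def nnSpan {n : ℕ} (S : Set (Fin n → ℝ)) : Set (Fin n → ℝ) :=
  {x | ∃ (r : ℕ) (c : Fin r → ℝ) (β : Fin r → (Fin n → ℝ)),
    (∀ m, 0 ≤ c m) ∧ (∀ m, β m ∈ S) ∧ x = ∑ m, c m • β m}

/-- A signed poset: a subset of `Φ_{B_n}`, antisymmetric and closed under positive
linear combinations remaining in `Φ_{B_n}`. -/
def IsSignedPoset (n : ℕ) (P : Set (Fin n → ℝ)) : Prop :=
  P ⊆ BnRoots n ∧ (∀ α ∈ P, -α ∉ P) ∧ ∀ α ∈ BnRoots n, α ∈ nnSpan P → α ∈ P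

/-- A `C_n`-signed poset. -/
def IsCnSignedPoset (n : ℕ) (Q : Set (Fin n → ℝ)) : Prop :=
  Q ⊆ CnRoots n ∧ (∀ α ∈ Q, -α ∉ Q) ∧ ∀ α ∈ CnRoots n, α ∈ nnSpan Q → α ∈ Q

/-- The root cone `K^rt_P`. -/
def rootCone {n : ℕ} (P : Set (Fin n → ℝ)) : Set (Fin n → ℝ) := nnSpan P

/-- The weight cone `K^wt_P`. -/
def weightCone {n : ℕ} (P : Set (Fin n → ℝ)) : Set (Fin n → ℝ) :=
  {f | ∀ α ∈ P, 0 ≤ dotR f α}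

/-- The Fischer (strict) order on `±[n] ∪ {0}`:
`a < b` iff `v(a) - v(b) ∈ P`, or (`b = -a ≠ 0` and `v(a) ∈ P`). -/
def fLT {n : ℕ} (P : Set (Fin n → ℝ)) (a b : Option (SIdx n)) : Prop :=
  vO a - vO b ∈ P ∨ (a ≠ none ∧ b = negO a ∧ vO a ∈ P)

/-- A subset of `±[n]` is isotropic if it contains no pair `{i, -i}`. -/
def Isotropic {n : ℕ} (J : Finset (SIdx n)) : Prop :=
  ∀ i : Fin n, ¬((true, i) ∈ J ∧ (false, i) ∈ J)

/-- Signed characteristic vector of a subset of `±[n]`. -/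
def chiF {n : ℕ} (J : Finset (SIdx n)) : Fin n → ℝ := fun i =>
  if (true, i) ∈ J then 1 else if (false, i) ∈ J then -1 else 0

/-- `J` is an ideal of the signed poset `P`. -/
def IsIdeal {n : ℕ} (P : Set (Fin n → ℝ)) (J : Finset (SIdx n)) : Prop :=
  Isotropic J ∧ ∀ α ∈ P, 0 ≤ dotR (chiF J) α

/-- Comparability in the Fischer order of `P`. -/
def fComp {n : ℕ} (P : Set (Fin n → ℝ)) (a b : SIdx n) : Prop :=
  fLT P (some a) (some b) ∨ fLT P (some b) (some a)

/-- One step in the comparability graph on a subset `J` of `±[n]`. -/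
def connStep {n : ℕ} (P : Set (Fin n → ℝ)) (J : Finset (SIdx n)) (a b : SIdx n) : Prop :=
  a ∈ J ∧ b ∈ J ∧ fComp P a b

/-- `J` is connected: nonempty, and any two of its elements are joined by a path inside `J`
in the comparability graph of the Fischer order of `P`. -/
def IsConnectedIdl {n : ℕ} (P : Set (Fin n → ℝ)) (J : Finset (SIdx n)) : Prop :=
  J.Nonempty ∧ ∀ a ∈ J, ∀ b ∈ J, Relation.ReflTransGen (connStep P J) a b

/-- A connected ideal of `P`. -/
def IsConnIdeal {n : ℕ} (P : Set (Fin n → ℝ)) (J : Finset (SIdx n)) : Prop :=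
  IsIdeal P J ∧ IsConnectedIdl P J

/-- Support `supp J = {|a| : a ∈ J}`. -/
def suppF {n : ℕ} (J : Finset (SIdx n)) : Finset (Fin n) := J.image Prod.snd

/-- `J` and `K` intersect nontrivially. -/
def NontrivInter {n : ℕ} (J K : Finset (SIdx n)) : Prop :=
  (suppF J ∩ suppF K).Nonempty ∧ ¬J ⊆ K ∧ ¬K ⊆ J

/-- `J` and `K` intersect trivially. -/
def TrivInter {n : ℕ} (J K : Finset (SIdx n)) : Prop := ¬NontrivInter J K

/-- A signed permutation, as an anti-symmetric bijection of `±[n]`. -/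
def IsSPerm {n : ℕ} (w : SIdx n ≃ SIdx n) : Prop := ∀ a, w (negS a) = negS (w a)

/-- Linear action of a signed permutation on `ℝ^n`, determined by `w(e_i) = v(w(+i))`. -/
def spAct {n : ℕ} (w : SIdx n ≃ SIdx n) (x : Fin n → ℝ) : Fin n → ℝ :=
  ∑ i, x i • vS (w (true, i))

/-- `w` is a linear extension of `P`: a signed permutation with `P ⊆ w(Φ⁺_{B_n})`. -/
def IsLinExt {n : ℕ} (P : Set (Fin n → ℝ)) (w : SIdx n ≃ SIdx n) : Prop :=
  IsSPerm w ∧ ∀ α ∈ P, ∃ β ∈ BnPos n, α = spAct w β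

/-- The (finite) set `𝓛(P)` of linear extensions of `P`. -/
def linExts (n : ℕ) (P : Set (Fin n → ℝ)) : Finset (SIdx n ≃ SIdx n) :=
  Finset.univ.filter (IsLinExt P)

/-- Simple roots of `Φ_{B_n}`: `α_i = e_i - e_{i+1}` for `i < n - 1`, `α_{n-1} = e_{n-1}`
(0-indexed). -/
def simpleRoot (n : ℕ) (i : Fin n) : Fin n → ℝ := fun j =>
  (if j = i then (1 : ℝ) else 0) - if (j : ℕ) = (i : ℕ) + 1 then 1 else 0

/-- `J^w_m = {w(1), …, w(m)}` (0-indexed: the images under `w` of `+1, …, +(m+1)`). -/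
def JwSet {n : ℕ} (w : SIdx n ≃ SIdx n) (m : Fin n) : Finset (SIdx n) :=
  (Finset.univ.filter (fun j : Fin n => j ≤ m)).image (fun j => w (true, j))

/-- An extensible ideal of `P`. -/
def Extensible (n : ℕ) (P : Set (Fin n → ℝ)) (J : Finset (SIdx n)) : Prop :=
  ∃ I : Finset (SIdx n), I.Nonempty ∧ Disjoint I J ∧
    IsIdeal P (J ∪ I) ∧ IsIdeal P (J ∪ I.image negS)

/-- The finite set `J_conn(P)` of connected ideals of `P`. -/
def JconnF (n : ℕ) (P : Set (Fin n → ℝ)) : Finset (Finset (SIdx n)) :=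
  Finset.univ.filter (IsConnIdeal P)

/-- Membership in `Π(P)`: an unordered pair of nontrivially intersecting connected ideals. -/
def inPiP {n : ℕ} (P : Set (Fin n → ℝ)) (p : Sym2 (Finset (SIdx n))) : Prop :=
  ∃ J K : Finset (SIdx n),
    p = s(J, K) ∧ IsConnIdeal P J ∧ IsConnIdeal P K ∧ NontrivInter J K

/-- The finite set `Π(P)` of unordered pairs of nontrivially intersecting connected ideals. -/
def PiP (n : ℕ) (P : Set (Fin n → ℝ)) : Finset (Sym2 (Finset (SIdx n))) :=
  Finset.univ.filter (inPiP P)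

/-- No connected ideal of `P` intersects two or more other connected ideals nontrivially. -/
def NoDoubleNontriv (n : ℕ) (P : Set (Fin n → ℝ)) : Prop :=
  ∀ J K K' : Finset (SIdx n), IsConnIdeal P J → IsConnIdeal P K → IsConnIdeal P K' →
    NontrivInter J K → NontrivInter J K' → K = K'

/-- The connected component of `a` inside `J` (w.r.t. the Fischer comparability graph). -/
def componentIn {n : ℕ} (P : Set (Fin n → ℝ)) (J : Finset (SIdx n)) (a : SIdx n) :
    Finset (SIdx n) :=
  J.filter (fun b => Relation.ReflTransGen (connStep P J) a b)

/-- The set of connected components of `J`. -/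
def componentsOf {n : ℕ} (P : Set (Fin n → ℝ)) (J : Finset (SIdx n)) :
    Finset (Finset (SIdx n)) :=
  J.image (componentIn P J)

/-- The signed support `supp±(f) = {sgn(f_i)·i : f_i ≠ 0}` of a vector `f ∈ ℝ^n`. -/
def suppPM {n : ℕ} (f : Fin n → ℝ) : Finset (SIdx n) :=
  Finset.univ.filter (fun a : SIdx n => if a.1 then 0 < f a.2 else f a.2 < 0)

/-- Index type for the variables `U_J`, `J` a connected ideal of `P`. -/
abbrev ConnIdx (n : ℕ) (P : Set (Fin n → ℝ)) := {J : Finset (SIdx n) // IsConnIdeal P J}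

/-- Integer signed characteristic vector, as an exponent vector for Laurent monomials. -/
def chiZ {n : ℕ} (J : Finset (SIdx n)) : Fin n →₀ ℤ :=
  Finsupp.equivFunOnFinite.symm (fun i =>
    if (true, i) ∈ J then 1 else if (false, i) ∈ J then -1 else 0)

/-- The map `φ : k[U_J : J ∈ J_conn(P)] → k[x_1^{±1}, …, x_n^{±1}]`, `U_J ↦ x^{χ_J}`. -/
def phiWt (n : ℕ) (P : Set (Fin n → ℝ)) (k : Type) [Field k] :
    MvPolynomial (ConnIdx n P) k →ₐ[k] AddMonoidAlgebra k (Fin n →₀ ℤ) :=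
  MvPolynomial.aeval (fun J => AddMonoidAlgebra.single (chiZ J.val) 1)

/-- The binomial `syz(U_J, U_K) = U_J U_K - (∏_A U_A) (∏_B U_B)`, where `A` runs over the
connected components of `J ∩ K` and `B` over the connected components of `supp±(χ_J + χ_K)`. -/
def syzPoly (n : ℕ) (P : Set (Fin n → ℝ)) (k : Type) [Field k] (J K : ConnIdx n P) :
    MvPolynomial (ConnIdx n P) k :=
  MvPolynomial.X J * MvPolynomial.X K -
    (∏ A ∈ Finset.univ.filter
        (fun A : ConnIdx n P => (A : Finset (SIdx n)) ∈ componentsOf P (J.val ∩ K.val)),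
        MvPolynomial.X A) *
      ∏ B ∈ Finset.univ.filter
        (fun B : ConnIdx n P =>
          (B : Finset (SIdx n)) ∈ componentsOf P (suppPM (chiF J.val + chiF K.val))),
        MvPolynomial.X B

/-- `θ_1, …, θ_r` is a regular sequence: the ideal it generates is proper, and each `θ_{m+1}`
is a non-zero-divisor modulo the ideal generated by `θ_1, …, θ_m`. -/
def IsRegSeq {R : Type} [CommRing R] {r : ℕ} (θ : Fin r → R) : Prop :=
  Ideal.span (Set.range θ) ≠ ⊤ ∧
    ∀ (m : ℕ) (hm : m < r) (x : R),
      θ ⟨m, hm⟩ * x ∈ Ideal.span (θ '' {j : Fin r | (j : ℕ) < m}) →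
        x ∈ Ideal.span (θ '' {j : Fin r | (j : ℕ) < m})

/-- The induced signed poset `P_A = P ∩ span_ℝ{e_i : i ∈ A}`. -/
def inducedPoset (n : ℕ) (P : Set (Fin n → ℝ)) (A : Finset (Fin n)) : Set (Fin n → ℝ) :=
  {α | α ∈ P ∧ α ∈ Submodule.span ℝ (stdB n '' (A : Set (Fin n)))}

/-- The major index of a signed permutation. -/
def majB {n : ℕ} (w : SIdx n ≃ SIdx n) : ℕ :=
  ∑ i ∈ Finset.univ.filter
      (fun i : Fin n => spAct w (simpleRoot n i) ∉ BnPos n), ((i : ℕ) + 1)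

/-- `[m]_q = 1 + q + ⋯ + q^{m-1}` in `ℤ[q]`. -/
def qInt (m : ℕ) : Polynomial ℤ := ∑ t ∈ Finset.range m, Polynomial.X ^ t

/-- The symmetric function `{J, K} ↦ ⟨x, χ_J + χ_K⟩` on unordered pairs. -/
def pairDot {n : ℕ} (x : Fin n → ℝ) : Sym2 (Finset (SIdx n)) → ℝ :=
  Sym2.lift ⟨fun J K => dotR x (chiF J + chiF K),
    fun J K => congrArg (dotR x) (add_comm (chiF J) (chiF K))⟩

/-- The symmetric function `{J, K} ↦ [|J| + |K|]_q` on unordered pairs. -/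
def pairQ {n : ℕ} : Sym2 (Finset (SIdx n)) → Polynomial ℤ :=
  Sym2.lift ⟨fun J K => qInt (J.card + K.card),
    fun J K => congrArg qInt (Nat.add_comm J.card K.card)⟩

/-- The principal order ideal `I_≤(a)` in the Fischer order restricted to `±[n]`. -/
def Ile {n : ℕ} (P : Set (Fin n → ℝ)) (a : SIdx n) : Set (SIdx n) :=
  {b | b = a ∨ fLT P (some b) (some a)}

/-- A set of signed indices is isotropic if it contains no pair `{i, -i}`. -/
def IsoSet {n : ℕ} (S : Set (SIdx n)) : Prop :=
  ∀ i : Fin n, ¬((true, i) ∈ S ∧ (false, i) ∈ S)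

/-- A covering pair of the Fischer order of `P`. -/
def CovPair {n : ℕ} (P : Set (Fin n → ℝ)) (a b : Option (SIdx n)) : Prop :=
  fLT P a b ∧ ¬∃ c : Option (SIdx n), fLT P a c ∧ fLT P c b

/-- The set of covering roots of `P`. -/
def covRoots {n : ℕ} (P : Set (Fin n → ℝ)) : Set (Fin n → ℝ) :=
  {x | ∃ a b : Option (SIdx n), CovPair P a b ∧ x = vO a - vO b}

/-- The set `J_ε = {i : ε_i = 1} ∪ {-i : ε_i = -1}` attached to a `{-1,0,1}`-vector. -/
def Jeps {n : ℕ} (ε : Fin n → ℝ) : Set (SIdx n) :=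
  {a | (a.1 = true ∧ ε a.2 = 1) ∨ (a.1 = false ∧ ε a.2 = -1)}

/-!
On `±[n]` the relation `v(a) - v(b) ∈ cone P` is a preorder which reverses under negation. Since `P`
contains every root of its cone, this preorder is the reflexive closure of the Fischer order, and
the ideals of `P` are its isotropic lower sets.

Send an ideal `J` of `P_A` to its down-closure `D` in `P`. The Fischer order of `P_A` is the
restriction of that of `P`, so `D ∩ ±A = J`; hence `J ↦ D` preserves and reflects inclusion and
keeps supports overlapping. If `x ≤ a` and `-x ≤ b` with `a, b ∈ J`, then `-b ≤ x ≤ a` puts `-b` in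
`D ∩ ±A = J`, which is impossible; so `D` is isotropic. Every element of `D` lies below one of `J`,
so `D` is connected as soon as `J` is.
-/

section SignedPoset

variable {n : ℕ} {P : Set (Fin n → ℝ)} {A : Finset (Fin n)} {J K D : Finset (SIdx n)}
  {a b c : SIdx n}

theorem negS_negS (a : SIdx n) : negS (negS a) = a := by
  simp [negS]

theorem eq_or_eq_negS_of_snd_eq (h : a.2 = b.2) : b = a ∨ b = negS a := by
  obtain ⟨s, i⟩ := a
  obtain ⟨t, j⟩ := b
  obtain rfl : i = j := h
  cases s <;> cases t <;> simp [negS]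

theorem vS_negS (a : SIdx n) : vS (negS a) = -vS a := by
  obtain ⟨s, i⟩ := a
  cases s <;> simp [vS, negS, rsgn]

theorem vS_sub_vS_negS (a : SIdx n) : vS a - vS (negS a) = (2 : ℝ) • vS a := by
  rw [vS_negS, sub_neg_eq_add, two_smul]

theorem vS_mem_BnRoots (a : SIdx n) : vS a ∈ BnRoots n :=
  Or.inr ⟨a.2, a.1, rfl⟩

theorem vS_sub_vS_mem_BnRoots (h : a.2 ≠ b.2) : vS a - vS b ∈ BnRoots n := by
  rw [sub_eq_add_neg, ← vS_negS]
  obtain hlt | hgt := lt_or_gt_of_ne h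
  · exact Or.inl ⟨a.2, b.2, hlt, a.1, (negS b).1, rfl⟩
  · exact Or.inl ⟨b.2, a.2, hgt, (negS b).1, a.1, add_comm _ _⟩

-- A short root `v(a)` is half of the difference `v(a) - v(-a)`.
theorem exists_pos_smul_eq_vS_sub_vS {α : Fin n → ℝ} (hα : α ∈ BnRoots n) :
    ∃ t : ℝ, 0 < t ∧ ∃ a b : SIdx n, t • α = vS a - vS b := by
  obtain ⟨i, j, -, s, t, rfl⟩ | ⟨i, s, rfl⟩ := hα
  · refine ⟨1, one_pos, (s, i), negS (t, j), ?_⟩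
    rw [one_smul, vS_negS, sub_neg_eq_add]
    rfl
  · exact ⟨2, two_pos, (s, i), negS (s, i), (vS_sub_vS_negS (s, i)).symm⟩

theorem nnSpan_eq_hull (S : Set (Fin n → ℝ)) : nnSpan S = PointedCone.hull ℝ S := by
  ext x
  rw [SetLike.mem_coe, Submodule.mem_span_set']
  constructor
  · rintro ⟨r, t, β, ht, hβ, rfl⟩
    exact ⟨r, fun m => ⟨t m, ht m⟩, fun m => ⟨β m, hβ m⟩, rfl⟩
  · rintro ⟨r, t, β, rfl⟩
    exact ⟨r, fun m => t m, fun m => β m, fun m => (t m).2, fun m => (β m).2, rfl⟩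

theorem subset_nnSpan : P ⊆ nnSpan P := by
  rw [nnSpan_eq_hull]
  exact PointedCone.subset_hull

theorem smul_mem_nnSpan {t : ℝ} (ht : 0 ≤ t) {x : Fin n → ℝ} (hx : x ∈ nnSpan P) :
    t • x ∈ nnSpan P := by
  rw [nnSpan_eq_hull] at hx ⊢
  exact PointedCone.smul_mem _ ht hx

theorem dotR_nonneg_of_mem_nnSpan {f x : Fin n → ℝ} (hf : ∀ α ∈ P, 0 ≤ dotR f α)
    (hx : x ∈ nnSpan P) : 0 ≤ dotR f x := by
  obtain ⟨r, t, β, ht, hβ, rfl⟩ := hx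
  change 0 ≤ f ⬝ᵥ ∑ m, t m • β m
  simp only [dotProduct_sum, dotProduct_smul]
  exact Finset.sum_nonneg fun m _ => smul_nonneg (ht m) (hf _ (hβ m))

/-- The preorder on `±[n]` in which `a ≤ b` when `v(a) - v(b)` lies in the cone spanned by `P`. For
a signed poset it is the reflexive closure of the Fischer order; defined through the cone it is
visibly transitive and reversed by negation. -/
def ConeLE (P : Set (Fin n → ℝ)) (a b : SIdx n) : Prop := vS a - vS b ∈ nnSpan P

theorem ConeLE.refl (P : Set (Fin n → ℝ)) (a : SIdx n) : ConeLE P a a := by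
  rw [ConeLE, sub_self, nnSpan_eq_hull]
  exact zero_mem _

theorem ConeLE.trans (hab : ConeLE P a b) (hbc : ConeLE P b c) : ConeLE P a c := by
  rw [ConeLE, nnSpan_eq_hull] at *
  rw [← sub_add_sub_cancel (vS a) (vS b)]
  exact add_mem hab hbc

theorem coneLE_negS_negS_iff : ConeLE P (negS a) (negS b) ↔ ConeLE P b a := by
  rw [ConeLE, ConeLE, vS_negS, vS_negS, neg_sub_neg]

theorem coneLE_of_fLT (h : fLT P (some a) (some b)) : ConeLE P a b := by
  obtain hsub | ⟨-, hb, ha⟩ := h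
  · exact subset_nnSpan hsub
  · obtain rfl : b = negS a := Option.some.inj hb
    rw [ConeLE, vS_sub_vS_negS]
    exact smul_mem_nnSpan zero_le_two (subset_nnSpan ha)

theorem fLT_of_coneLE_of_ne (hP : IsSignedPoset n P) (h : ConeLE P a b) (hab : a ≠ b) :
    fLT P (some a) (some b) := by
  obtain ⟨-, -, hclosed⟩ := hP
  by_cases hsnd : a.2 = b.2
  · obtain rfl | rfl := eq_or_eq_negS_of_snd_eq hsnd
    · exact absurd rfl hab
    · have hcone : vS a ∈ nnSpan P := by
        rw [ConeLE, vS_sub_vS_negS] at h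
        simpa using smul_mem_nnSpan (inv_nonneg.2 zero_le_two) h
      exact Or.inr ⟨Option.some_ne_none a, rfl, hclosed _ (vS_mem_BnRoots a) hcone⟩
  · exact Or.inl (hclosed _ (vS_sub_vS_mem_BnRoots hsnd) h)

theorem coneLE_iff_eq_or_fLT (hP : IsSignedPoset n P) :
    ConeLE P a b ↔ a = b ∨ fLT P (some a) (some b) := by
  constructor
  · exact fun h => or_iff_not_imp_left.2 (fLT_of_coneLE_of_ne hP h)
  · rintro (rfl | h)
    · exact ConeLE.refl P a
    · exact coneLE_of_fLT h

theorem isotropic_iff : Isotropic J ↔ ∀ a ∈ J, negS a ∉ J := by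
  constructor
  · rintro h ⟨_ | _, i⟩ ha hna
    · exact h i ⟨hna, ha⟩
    · exact h i ⟨ha, hna⟩
  · exact fun h i hi => h _ hi.1 hi.2

theorem dotR_chiF_vS (hJ : Isotropic J) (a : SIdx n) :
    dotR (chiF J) (vS a) = (if a ∈ J then 1 else 0) - (if negS a ∈ J then 1 else 0) := by
  obtain ⟨s, i⟩ := a
  have hcoord : dotR (chiF J) (vS (s, i)) = rsgn s * chiF J i := by
    change chiF J ⬝ᵥ rsgn s • Pi.single i 1 = _
    rw [dotProduct_smul, dotProduct_single_one, smul_eq_mul]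
  have hi := hJ i
  cases s <;> simp only [hcoord, chiF, rsgn, negS] <;> grind

theorem dotR_chiF_vS_sub_vS (J : Finset (SIdx n)) (a b : SIdx n) :
    dotR (chiF J) (vS a - vS b) = dotR (chiF J) (vS a) - dotR (chiF J) (vS b) :=
  dotProduct_sub _ _ _

theorem IsIdeal.mem_of_coneLE (hJ : IsIdeal P J) (hab : ConeLE P a b) (hb : b ∈ J) : a ∈ J := by
  have hnonneg : 0 ≤ dotR (chiF J) (vS a - vS b) := dotR_nonneg_of_mem_nnSpan hJ.2 hab
  have hnb : negS b ∉ J := isotropic_iff.1 hJ.1 b hb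
  rw [dotR_chiF_vS_sub_vS, dotR_chiF_vS hJ.1, dotR_chiF_vS hJ.1, if_pos hb, if_neg hnb] at hnonneg
  by_contra ha
  rw [if_neg ha] at hnonneg
  split_ifs at hnonneg <;> linarith

theorem isIdeal_of_isotropic_of_lower (hP : P ⊆ BnRoots n) (hiso : Isotropic J)
    (hlower : ∀ a b, ConeLE P a b → b ∈ J → a ∈ J) : IsIdeal P J := by
  refine ⟨hiso, fun α hα => ?_⟩
  obtain ⟨t, ht, a, b, hab⟩ := exists_pos_smul_eq_vS_sub_vS (hP hα)
  have hle : ConeLE P a b := by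
    rw [ConeLE, ← hab]
    exact smul_mem_nnSpan ht.le (subset_nnSpan hα)
  have hpos : b ∈ J → a ∈ J := hlower a b hle
  have hneg : negS a ∈ J → negS b ∈ J := hlower _ _ (coneLE_negS_negS_iff.2 hle)
  have hscaled : 0 ≤ t * dotR (chiF J) α := by
    calc 0 ≤ dotR (chiF J) (vS a - vS b) := by
          rw [dotR_chiF_vS_sub_vS, dotR_chiF_vS hiso, dotR_chiF_vS hiso]
          grind
      _ = t * dotR (chiF J) α := by
          rw [← hab]
          exact dotProduct_smul _ _ _
  exact nonneg_of_mul_nonneg_right hscaled ht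

theorem inducedPoset_subset : inducedPoset n P A ⊆ P := fun _ h => h.1

theorem isSignedPoset_inducedPoset (hP : IsSignedPoset n P) (A : Finset (Fin n)) :
    IsSignedPoset n (inducedPoset n P A) := by
  obtain ⟨hroots, hasymm, hclosed⟩ := hP
  refine ⟨inducedPoset_subset.trans hroots, fun α hα hnα => hasymm α hα.1 hnα.1,
    fun α hα ⟨r, t, β, ht, hβ, hsum⟩ => ⟨?_, ?_⟩⟩
  · exact hclosed α hα ⟨r, t, β, ht, fun m => inducedPoset_subset (hβ m), hsum⟩
  · rw [hsum]
    exact Submodule.sum_smul_mem _ t fun m _ => (hβ m).2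

theorem fLT_inducedPoset_iff (ha : a.2 ∈ A) (hb : b.2 ∈ A) :
    fLT (inducedPoset n P A) (some a) (some b) ↔ fLT P (some a) (some b) := by
  have hspan : ∀ c : SIdx n, c.2 ∈ A → vS c ∈ Submodule.span ℝ (stdB n '' (A : Set (Fin n))) :=
    fun c hc => Submodule.smul_mem _ _ (Submodule.subset_span ⟨c.2, hc, rfl⟩)
  have hsub := Submodule.sub_mem _ (hspan a ha) (hspan b hb)
  exact or_congr (and_iff_left hsub)
    (and_congr_right' (and_congr_right' (and_iff_left (hspan a ha))))

theorem coneLE_inducedPoset_iff (hP : IsSignedPoset n P) (ha : a.2 ∈ A) (hb : b.2 ∈ A) :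
    ConeLE (inducedPoset n P A) a b ↔ ConeLE P a b := by
  rw [coneLE_iff_eq_or_fLT hP, coneLE_iff_eq_or_fLT (isSignedPoset_inducedPoset hP A),
    fLT_inducedPoset_iff ha hb]

theorem connStep_inducedPoset (hJA : ∀ a ∈ J, a.2 ∈ A) :
    connStep (inducedPoset n P A) J = connStep P J := by
  ext a b
  refine and_congr_right fun ha => and_congr_right fun hb => ?_
  rw [fComp, fLT_inducedPoset_iff (hJA a ha) (hJA b hb),
    fLT_inducedPoset_iff (hJA b hb) (hJA a ha), fComp]

theorem isConnectedIdl_inducedPoset_iff (hJA : ∀ a ∈ J, a.2 ∈ A) :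
    IsConnectedIdl (inducedPoset n P A) J ↔ IsConnectedIdl P J := by
  rw [IsConnectedIdl, connStep_inducedPoset hJA, IsConnectedIdl]

theorem IsConnectedIdl.of_forall_exists_fComp (hJ : IsConnectedIdl P J) (hJD : J ⊆ D)
    (hD : ∀ x ∈ D, ∃ a ∈ J, x = a ∨ fComp P x a) : IsConnectedIdl P D := by
  have hretract : ∀ x ∈ D, ∃ a ∈ J, Relation.ReflTransGen (connStep P D) x a ∧
      Relation.ReflTransGen (connStep P D) a x := by
    intro x hx
    obtain ⟨a, ha, rfl | hxa⟩ := hD x hx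
    · exact ⟨x, ha, .refl, .refl⟩
    · exact ⟨a, ha, .single ⟨hx, hJD ha, hxa⟩, .single ⟨hJD ha, hx, hxa.symm⟩⟩
  refine ⟨hJ.1.mono hJD, fun x hx y hy => ?_⟩
  obtain ⟨a, ha, hxa, -⟩ := hretract x hx
  obtain ⟨b, hb, -, hby⟩ := hretract y hy
  have hab : Relation.ReflTransGen (connStep P D) a b :=
    Relation.ReflTransGen.mono (fun _ _ ⟨hu, hv, huv⟩ => ⟨hJD hu, hJD hv, huv⟩) _ _ (hJ.2 a ha b hb)
  exact (hxa.trans hab).trans hby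

/-- The set of elements of `±[n]` below some element of `J` in the order of `P`; it extends an ideal
of an induced signed poset to an ideal of `P`. -/
def downClosure (P : Set (Fin n → ℝ)) (J : Finset (SIdx n)) : Finset (SIdx n) :=
  Finset.univ.filter fun a => ∃ b ∈ J, ConeLE P a b

theorem mem_downClosure : a ∈ downClosure P J ↔ ∃ b ∈ J, ConeLE P a b := by
  simp [downClosure]

theorem subset_downClosure : J ⊆ downClosure P J :=
  fun a ha => mem_downClosure.2 ⟨a, ha, ConeLE.refl P a⟩

theorem mem_downClosure_of_coneLE (hab : ConeLE P a b) (hb : b ∈ downClosure P J) :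
    a ∈ downClosure P J := by
  obtain ⟨c, hc, hbc⟩ := mem_downClosure.1 hb
  exact mem_downClosure.2 ⟨c, hc, hab.trans hbc⟩

theorem downClosure_subset_iff :
    downClosure P J ⊆ downClosure P K ↔ J ⊆ downClosure P K := by
  refine ⟨subset_downClosure.trans, fun h a ha => ?_⟩
  obtain ⟨b, hb, hab⟩ := mem_downClosure.1 ha
  exact mem_downClosure_of_coneLE hab (h hb)

theorem IsConnectedIdl.downClosure (hP : IsSignedPoset n P) (hJ : IsConnectedIdl P J) :
    IsConnectedIdl P (downClosure P J) := by
  refine hJ.of_forall_exists_fComp subset_downClosure fun x hx => ?_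
  obtain ⟨a, ha, hxa⟩ := mem_downClosure.1 hx
  exact ⟨a, ha, ((coneLE_iff_eq_or_fLT hP).1 hxa).imp_right Or.inl⟩

/-- `J` is an ideal of the induced signed poset `P_A`. Since `inducedPoset n P A` still lives in
`ℝ^n`, the condition `J ⊆ ±A` is imposed separately. -/
structure IsInducedIdeal (P : Set (Fin n → ℝ)) (A : Finset (Fin n)) (J : Finset (SIdx n)) :
    Prop where
  snd_mem : ∀ a ∈ J, a.2 ∈ A
  isIdeal : IsIdeal (inducedPoset n P A) J

namespace IsInducedIdeal

theorem mem_downClosure_iff (hP : IsSignedPoset n P) (hJ : IsInducedIdeal P A J) (ha : a.2 ∈ A) :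
    a ∈ downClosure P J ↔ a ∈ J := by
  refine ⟨fun h => ?_, fun h => subset_downClosure h⟩
  obtain ⟨b, hb, hab⟩ := mem_downClosure.1 h
  exact hJ.isIdeal.mem_of_coneLE ((coneLE_inducedPoset_iff hP ha (hJ.snd_mem b hb)).2 hab) hb

theorem downClosure_subset_downClosure_iff (hP : IsSignedPoset n P) (hJ : IsInducedIdeal P A J)
    (hK : IsInducedIdeal P A K) : downClosure P J ⊆ downClosure P K ↔ J ⊆ K := by
  rw [downClosure_subset_iff]
  exact forall₂_congr fun a ha => hK.mem_downClosure_iff hP (hJ.snd_mem a ha)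

theorem downClosure_inj (hP : IsSignedPoset n P) (hJ : IsInducedIdeal P A J)
    (hK : IsInducedIdeal P A K) : downClosure P J = downClosure P K ↔ J = K := by
  rw [subset_antisymm_iff, hJ.downClosure_subset_downClosure_iff hP hK,
    hK.downClosure_subset_downClosure_iff hP hJ, ← subset_antisymm_iff]

theorem isotropic_downClosure (hP : IsSignedPoset n P) (hJ : IsInducedIdeal P A J) :
    Isotropic (downClosure P J) := by
  refine isotropic_iff.2 fun x hx hnx => ?_
  obtain ⟨b, hb, hnxb⟩ := mem_downClosure.1 hnx
  have hnbx : ConeLE P (negS b) x := by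
    rwa [← coneLE_negS_negS_iff, negS_negS]
  have hnbA : (negS b).2 ∈ A := hJ.snd_mem b hb
  have hnb : negS b ∈ J :=
    (hJ.mem_downClosure_iff hP hnbA).1 (mem_downClosure_of_coneLE hnbx hx)
  exact isotropic_iff.1 hJ.isIdeal.1 b hb hnb

theorem isConnIdeal_downClosure (hP : IsSignedPoset n P) (hJ : IsInducedIdeal P A J)
    (hconn : IsConnectedIdl (inducedPoset n P A) J) : IsConnIdeal P (downClosure P J) :=
  ⟨isIdeal_of_isotropic_of_lower hP.1 (hJ.isotropic_downClosure hP)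
      fun _ _ => mem_downClosure_of_coneLE,
    ((isConnectedIdl_inducedPoset_iff hJ.snd_mem).1 hconn).downClosure hP⟩

theorem nontrivInter_downClosure (hP : IsSignedPoset n P) (hJ : IsInducedIdeal P A J)
    (hK : IsInducedIdeal P A K) (h : NontrivInter J K) :
    NontrivInter (downClosure P J) (downClosure P K) := by
  obtain ⟨hsupp, hJK, hKJ⟩ := h
  refine ⟨hsupp.mono ?_, (hJ.downClosure_subset_downClosure_iff hP hK).not.2 hJK,
    (hK.downClosure_subset_downClosure_iff hP hJ).not.2 hKJ⟩
  exact Finset.inter_subset_inter (Finset.image_subset_image subset_downClosure)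
    (Finset.image_subset_image subset_downClosure)

end IsInducedIdeal

end SignedPoset

theorem statement_17 (n : ℕ) (hn : 1 ≤ n) (P : Set (Fin n → ℝ)) (hP : IsSignedPoset n P)
    (A : Finset (Fin n)) :
    IsSignedPoset n (inducedPoset n P A) ∧
    ((∃ J K K' : Finset (SIdx n),
        (∀ a ∈ J, a.2 ∈ A) ∧ (∀ a ∈ K, a.2 ∈ A) ∧ (∀ a ∈ K', a.2 ∈ A) ∧
        IsConnIdeal (inducedPoset n P A) J ∧ IsConnIdeal (inducedPoset n P A) K ∧
        IsConnIdeal (inducedPoset n P A) K' ∧ K ≠ K' ∧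
        NontrivInter J K ∧ NontrivInter J K') →
      ∃ J K K' : Finset (SIdx n),
        IsConnIdeal P J ∧ IsConnIdeal P K ∧ IsConnIdeal P K' ∧ K ≠ K' ∧
        NontrivInter J K ∧ NontrivInter J K') := by
  refine ⟨isSignedPoset_inducedPoset hP A, ?_⟩
  rintro ⟨J, K, K', hJA, hKA, hKA', ⟨hJ, hJconn⟩, ⟨hK, hKconn⟩, ⟨hK', hKconn'⟩, hne, hJK, hJK'⟩
  have hJind : IsInducedIdeal P A J := ⟨hJA, hJ⟩
  have hKind : IsInducedIdeal P A K := ⟨hKA, hK⟩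
  have hKind' : IsInducedIdeal P A K' := ⟨hKA', hK'⟩
  exact ⟨downClosure P J, downClosure P K, downClosure P K',
    hJind.isConnIdeal_downClosure hP hJconn, hKind.isConnIdeal_downClosure hP hKconn,
    hKind'.isConnIdeal_downClosure hP hKconn', (hKind.downClosure_inj hP hKind').not.2 hne,
    hJind.nontrivInter_downClosure hP hKind hJK, hJind.nontrivInter_downClosure hP hKind' hJK'⟩
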